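/- If 0 < τ < 1/3, then the capillary Whitham symbol m has a unique critical point z* on (0, ∞): m is strictly decreasing on (0, z*] and strictly increasing on [z*, ∞), so z* is the unique local (and global) minimum of m on (0, ∞); moreover m(z) → ∞ as z → ∞. -/

import Mathlib

open Real Filter

/-- The capillary Whitham symbol `m(z) = √(gd(1 + τ z²) tanh z / z)`, `m(0) = √(gd)`,
with `τ = T/(g d²)`. -/
noncomputable def mW (g d T : ℝ) (z : ℝ) : ℝ :=
  if z = 0 then Real.sqrt (g * d)
  else Real.sqrt (g * d * (1 + T / (g * d ^ 2) * z ^ 2) * Real.tanh z / z)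

open scoped Topology

/-!
On `(0, ∞)` the derivative of `m` has the sign of `τ - ψ(z)`, where
`ψ(z) = (sinh z cosh z - z) / (z² (sinh z cosh z + z))` does not involve `τ`. The function `ψ` is
strictly decreasing and satisfies `1 / (3 cosh² z) ≤ ψ(z) ≤ 1 / z²`, so for `0 < τ < 1/3` the
derivative vanishes exactly once, changing sign from negative to positive.

The monotonicity of `ψ` is equivalent to Wilker's inequality `(sinh z / z)² + tanh z / z > 2`.
By AM-GM this follows from `(sinh z / z)² (tanh z / z) > 1`, which is Lazarević's inequality
`cosh z < (sinh z / z)³`; the latter is Bernoulli's inequality for the derivative of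
`sinh z / (cosh z)^(1/3) - z`.
-/

theorem lt_of_strictAntiOn_Ioc_of_strictMonoOn_Ici {α β : Type*} [LinearOrder α] [Preorder β]
    {f : α → β} {a w z : α} (hanti : StrictAntiOn f (Set.Ioc a w))
    (hmono : StrictMonoOn f (Set.Ici w)) (hz : a < z) (hne : z ≠ w) : f w < f z := by
  rcases hne.lt_or_gt with hzw | hwz
  · exact hanti ⟨hz, hzw.le⟩ ⟨hz.trans hzw, le_rfl⟩ hzw
  · exact hmono Set.self_mem_Ici hwz.le hwz

theorem hasDerivAt_tanh (x : ℝ) : HasDerivAt tanh (1 / cosh x ^ 2) x := by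
  have h := (hasDerivAt_sinh x).div (hasDerivAt_cosh x) (cosh_pos x).ne'
  rw [← sq, ← sq, cosh_sq_sub_sinh_sq] at h
  exact h.congr_of_eventuallyEq (.of_forall tanh_eq_sinh_div_cosh)

theorem tanh_le_self {x : ℝ} (hx : 0 ≤ x) : tanh x ≤ x := by
  have hmono : Monotone fun y => y - tanh y := by
    refine monotone_of_hasDerivAt_nonneg (fun y => (hasDerivAt_id y).sub (hasDerivAt_tanh y)) ?_
    intro y
    have hcosh : 1 ≤ cosh y ^ 2 := one_le_pow₀ (one_le_cosh y)
    simpa only [Pi.zero_apply, sub_nonneg] using div_le_one_of_le₀ hcosh (sq_nonneg _)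
  simpa only [tanh_zero, sub_zero, sub_nonneg] using hmono hx

theorem tanh_pos {x : ℝ} (hx : 0 < x) : 0 < tanh x := by
  rw [tanh_eq_sinh_div_cosh]
  exact div_pos (sinh_pos_iff.2 hx) (cosh_pos x)

theorem one_sub_exp_neg_le_tanh (x : ℝ) : 1 - exp (-x) ≤ tanh x := by
  rw [tanh_eq_sinh_div_cosh, le_div_iff₀ (cosh_pos x)]
  nlinarith [cosh_sub_sinh x, exp_pos (-x), one_le_cosh x]

theorem tendsto_tanh_atTop : Tendsto tanh atTop (𝓝 1) := by
  have hlower : Tendsto (fun x => 1 - exp (-x)) atTop (𝓝 1) := by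
    simpa only [sub_zero] using tendsto_exp_neg_atTop_nhds_zero.const_sub 1
  exact tendsto_of_tendsto_of_tendsto_of_le_of_le hlower tendsto_const_nhds
    one_sub_exp_neg_le_tanh fun x => (tanh_lt_one x).le

theorem sinh_mul_cosh_add_self_pos {x : ℝ} (hx : 0 < x) : 0 < sinh x * cosh x + x :=
  add_pos (mul_pos (sinh_pos_iff.2 hx) (cosh_pos x)) hx

theorem self_add_cube_div_six_le_sinh {x : ℝ} (hx : 0 ≤ x) : x + x ^ 3 / 6 ≤ sinh x := by
  have h := sum_le_hasSum (Finset.range 2) (fun n _ => by positivity) (hasSum_sinh x)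
  norm_num [Finset.sum_range_succ, Nat.factorial] at h
  exact h

theorem two_thirds_mul_cube_le_sinh_mul_cosh_sub_self {x : ℝ} (hx : 0 ≤ x) :
    2 / 3 * x ^ 3 ≤ sinh x * cosh x - x := by
  have h := self_add_cube_div_six_le_sinh (mul_nonneg zero_le_two hx)
  rw [sinh_two_mul] at h
  linarith

theorem cosh_rpow_four_thirds_lt {x : ℝ} (hx : x ≠ 0) :
    cosh x ^ (4 / 3 : ℝ) < 1 + 2 / 3 * sinh x ^ 2 := by
  have hbernoulli : (1 + sinh x ^ 2) ^ (2 / 3 : ℝ) < 1 + 2 / 3 * sinh x ^ 2 :=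
    rpow_one_add_lt_one_add_mul_self (neg_one_lt_zero.le.trans (sq_nonneg _))
      (pow_ne_zero 2 (sinh_ne_zero.2 hx)) (by norm_num) (by norm_num)
  rwa [← cosh_sq', ← rpow_natCast_mul (cosh_pos x).le,
    show ((2 : ℕ) : ℝ) * (2 / 3) = 4 / 3 by norm_num] at hbernoulli

theorem hasDerivAt_sinh_mul_cosh_rpow_sub_self (x : ℝ) :
    HasDerivAt (fun y => sinh y * cosh y ^ (-(1 / 3) : ℝ) - y)
      ((1 + 2 / 3 * sinh x ^ 2) / cosh x ^ (4 / 3 : ℝ) - 1) x := by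
  have h := ((hasDerivAt_sinh x).mul
    ((hasDerivAt_cosh x).rpow_const (p := -(1 / 3)) (.inl (cosh_pos x).ne'))).sub (hasDerivAt_id x)
  have hpow : cosh x ^ (-(1 / 3) : ℝ) = cosh x / cosh x ^ (4 / 3 : ℝ) := by
    rw [← rpow_one_sub' (cosh_pos x).le (by norm_num)]
    norm_num
  have hpow' : cosh x ^ (-(1 / 3) - 1 : ℝ) = 1 / cosh x ^ (4 / 3 : ℝ) := by
    rw [one_div (cosh x ^ _), ← rpow_neg (cosh_pos x).le]
    norm_num
  refine h.congr_deriv ?_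
  rw [hpow, hpow']
  linear_combination cosh_sq x / cosh x ^ (4 / 3 : ℝ)

theorem self_mul_cosh_rpow_one_third_lt_sinh {x : ℝ} (hx : 0 < x) :
    x * cosh x ^ (1 / 3 : ℝ) < sinh x := by
  have hmono : StrictMonoOn (fun y => sinh y * cosh y ^ (-(1 / 3) : ℝ) - y) (Set.Ici 0) := by
    refine strictMonoOn_of_hasDerivWithinAt_pos (convex_Ici 0)
      (fun y _ => (hasDerivAt_sinh_mul_cosh_rpow_sub_self y).continuousAt.continuousWithinAt)
      (fun y _ => (hasDerivAt_sinh_mul_cosh_rpow_sub_self y).hasDerivWithinAt) fun y hy => ?_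
    rw [interior_Ici] at hy
    exact sub_pos.2 <| (one_lt_div (rpow_pos_of_pos (cosh_pos y) _)).2 <|
      cosh_rpow_four_thirds_lt (ne_of_gt hy)
  have h := hmono Set.self_mem_Ici (Set.mem_Ici.2 hx.le) hx
  simp only [sinh_zero, zero_mul, sub_zero, sub_pos, rpow_neg (cosh_pos x).le] at h
  rwa [← div_eq_mul_inv, lt_div_iff₀ (rpow_pos_of_pos (cosh_pos x) _)] at h

theorem cosh_lt_sinh_div_self_pow_three {x : ℝ} (hx : x ≠ 0) : cosh x < (sinh x / x) ^ 3 := by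
  wlog hpos : 0 < x generalizing x
  · have hneg : 0 < -x := neg_pos.2 (hx.lt_of_le (not_lt.1 hpos))
    simpa only [cosh_neg, sinh_neg, neg_div_neg_eq] using this (neg_ne_zero.2 hx) hneg
  have hcube : (cosh x ^ (1 / 3 : ℝ)) ^ 3 = cosh x := by
    rw [← rpow_mul_natCast (cosh_pos x).le]
    norm_num
  rw [← hcube]
  refine pow_lt_pow_left₀ ?_ (rpow_nonneg (cosh_pos x).le _) three_ne_zero
  rw [lt_div_iff₀ hpos, mul_comm]
  exact self_mul_cosh_rpow_one_third_lt_sinh hpos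

theorem two_lt_sinh_div_self_sq_add_tanh_div_self {x : ℝ} (hx : x ≠ 0) :
    2 < (sinh x / x) ^ 2 + tanh x / x := by
  have hc := cosh_pos x
  have htanh : tanh x / x = sinh x / x / cosh x := by rw [tanh_eq_sinh_div_cosh, div_right_comm]
  have hprod : 1 < (sinh x / x) ^ 2 * (tanh x / x) := by
    rw [htanh, ← mul_div_assoc, ← pow_succ, one_lt_div hc]
    exact cosh_lt_sinh_div_self_pow_three hx
  have hpos : 0 < tanh x / x :=
    pos_of_mul_pos_right (one_pos.trans hprod) (sq_nonneg _)
  refine lt_of_pow_lt_pow_left₀ 2 (by positivity) ?_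
  linarith [four_mul_le_sq_add ((sinh x / x) ^ 2) (tanh x / x)]

/-- The value of the dimensionless surface tension `τ` for which `z > 0` is a critical point of
the capillary Whitham symbol. -/
noncomputable def criticalTau (z : ℝ) : ℝ :=
  (sinh z * cosh z - z) / (z ^ 2 * (sinh z * cosh z + z))

theorem hasDerivAt_criticalTau {z : ℝ} (hz : 0 < z) :
    HasDerivAt criticalTau
      (-(2 * cosh z ^ 2 / (z * (sinh z * cosh z + z) ^ 2)) *
        ((sinh z / z) ^ 2 + tanh z / z - 2)) z := by
  have hprod := (hasDerivAt_sinh z).mul (hasDerivAt_cosh z)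
  have hdenom : z ^ 2 * (sinh z * cosh z + z) ≠ 0 :=
    (mul_pos (pow_pos hz 2) (sinh_mul_cosh_add_self_pos hz)).ne'
  have h := (hprod.sub (hasDerivAt_id z)).div
    (((hasDerivAt_id z).pow 2).mul (hprod.add (hasDerivAt_id z))) hdenom
  refine h.congr_deriv ?_
  have hcosh := (cosh_pos z).ne'
  simp only [Pi.mul_apply, Pi.add_apply, Pi.sub_apply, Pi.pow_apply, id, tanh_eq_sinh_div_cosh]
  field_simp
  linear_combination -2 * z ^ 3 * cosh_sq z

theorem strictAntiOn_criticalTau : StrictAntiOn criticalTau (Set.Ioi 0) := by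
  refine strictAntiOn_of_hasDerivWithinAt_neg (convex_Ioi 0)
    (fun z hz => (hasDerivAt_criticalTau hz).continuousAt.continuousWithinAt)
    (fun z hz => (hasDerivAt_criticalTau (interior_subset hz)).hasDerivWithinAt) fun z hz => ?_
  rw [interior_Ioi] at hz
  have hz : 0 < z := hz
  have := cosh_pos z
  have := sinh_mul_cosh_add_self_pos hz
  exact mul_neg_of_neg_of_pos (neg_neg_of_pos (by positivity))
    (sub_pos.2 (two_lt_sinh_div_self_sq_add_tanh_div_self hz.ne'))

theorem continuousOn_criticalTau : ContinuousOn criticalTau (Set.Ioi 0) := fun _ hz =>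
  (hasDerivAt_criticalTau hz).continuousAt.continuousWithinAt

theorem one_div_three_mul_cosh_sq_le_criticalTau {z : ℝ} (hz : 0 < z) :
    1 / (3 * cosh z ^ 2) ≤ criticalTau z := by
  have hc := cosh_pos z
  have := sinh_mul_cosh_add_self_pos hz
  have hsum : sinh z * cosh z + z ≤ 2 * z * cosh z ^ 2 := by
    have htanh : sinh z ≤ z * cosh z := by
      simpa only [tanh_eq_sinh_div_cosh, div_le_iff₀ hc] using tanh_le_self hz.le
    nlinarith [one_le_pow₀ (n := 2) (one_le_cosh z)]
  rw [criticalTau, div_le_div_iff₀ (by positivity) (by positivity), one_mul]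
  calc z ^ 2 * (sinh z * cosh z + z)
      ≤ z ^ 2 * (2 * z * cosh z ^ 2) := by gcongr
    _ = 2 / 3 * z ^ 3 * (3 * cosh z ^ 2) := by ring
    _ ≤ (sinh z * cosh z - z) * (3 * cosh z ^ 2) := by
      gcongr
      exact two_thirds_mul_cube_le_sinh_mul_cosh_sub_self hz.le

theorem criticalTau_le_one_div_sq {z : ℝ} (hz : 0 < z) : criticalTau z ≤ 1 / z ^ 2 := by
  have := sinh_mul_cosh_add_self_pos hz
  rw [criticalTau, div_le_div_iff₀ (by positivity) (by positivity)]
  nlinarith [pow_pos hz 2]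

theorem exists_criticalTau_eq {τ : ℝ} (hτ0 : 0 < τ) (hτ1 : τ < 1 / 3) :
    ∃ z : ℝ, 0 < z ∧ criticalTau z = τ := by
  have hnear : ∀ᶠ z in 𝓝[>] 0, τ ≤ criticalTau z := by
    have hcont : ContinuousAt (fun z => 1 / (3 * cosh z ^ 2)) 0 :=
      continuousAt_const.div (by fun_prop) (by simp)
    have hlt := hcont.eventually_const_lt (u := τ) (by simpa using hτ1)
    filter_upwards [hlt.filter_mono nhdsWithin_le_nhds, self_mem_nhdsWithin] with z hτz hz
    exact hτz.le.trans (one_div_three_mul_cosh_sq_le_criticalTau hz)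
  have hfar : ∀ᶠ z in atTop, criticalTau z ≤ τ := by
    have hlim : Tendsto (fun z : ℝ => 1 / z ^ 2) atTop (𝓝 0) :=
      tendsto_const_nhds.div_atTop (tendsto_pow_atTop two_ne_zero)
    filter_upwards [hlim.eventually_le_const hτ0, eventually_gt_atTop 0] with z hzτ hz
    exact (criticalTau_le_one_div_sq hz).trans hzτ
  exact isPreconnected_Ioi.intermediate_value₂_eventually₂
    (le_principal_iff.2 (Ioi_mem_atTop 0)) (le_principal_iff.2 self_mem_nhdsWithin)
    continuousOn_criticalTau continuousOn_const hfar hnear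

/-- The square of the capillary Whitham symbol divided by `gd`, a function of the dimensionless
surface tension `τ` alone. It is meant for `z ≠ 0`: division by zero gives the value `0` at `z = 0`
instead of the limit `1`. -/
noncomputable def normalizedSymbolSq (τ z : ℝ) : ℝ :=
  (1 + τ * z ^ 2) * tanh z / z

theorem normalizedSymbolSq_eq (τ z : ℝ) :
    normalizedSymbolSq τ z = tanh z * (z⁻¹ + τ * z) := by
  rcases eq_or_ne z 0 with rfl | hz
  · simp [normalizedSymbolSq]
  · rw [normalizedSymbolSq]
    field_simp

theorem normalizedSymbolSq_pos {τ z : ℝ} (hτ : 0 ≤ τ) (hz : 0 < z) :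
    0 < normalizedSymbolSq τ z := by
  have := tanh_pos hz
  rw [normalizedSymbolSq]
  positivity

theorem tendsto_normalizedSymbolSq_atTop {τ : ℝ} (hτ : 0 < τ) :
    Tendsto (normalizedSymbolSq τ) atTop atTop := by
  simp only [funext (normalizedSymbolSq_eq τ)]
  exact tendsto_tanh_atTop.pos_mul_atTop one_pos
    (tendsto_inv_atTop_zero.add_atTop (tendsto_id.const_mul_atTop hτ))

theorem hasDerivAt_normalizedSymbolSq (τ : ℝ) {z : ℝ} (hz : 0 < z) :
    HasDerivAt (normalizedSymbolSq τ)
      ((sinh z * cosh z + z) / cosh z ^ 2 * (τ - criticalTau z)) z := by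
  have h := (((((hasDerivAt_id z).pow 2).const_mul τ).const_add 1).mul (hasDerivAt_tanh z)).div
    (hasDerivAt_id z) hz.ne'
  refine h.congr_deriv ?_
  have hadd := (sinh_mul_cosh_add_self_pos hz).ne'
  have hcosh := (cosh_pos z).ne'
  simp only [Pi.mul_apply, Pi.pow_apply, id, criticalTau, tanh_eq_sinh_div_cosh]
  field_simp
  ring

theorem mW_eq_sqrt_normalizedSymbolSq (g d T : ℝ) {z : ℝ} (hz : z ≠ 0) :
    mW g d T z = √(g * d * normalizedSymbolSq (T / (g * d ^ 2)) z) := by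
  rw [mW, if_neg hz, normalizedSymbolSq]
  congr 1
  ring

theorem hasDerivAt_mW {g d T z : ℝ} (hgd : 0 < g * d) (hτ : 0 ≤ T / (g * d ^ 2)) (hz : 0 < z) :
    HasDerivAt (mW g d T)
      (g * d * ((sinh z * cosh z + z) / cosh z ^ 2 * (T / (g * d ^ 2) - criticalTau z)) /
        (2 * mW g d T z)) z := by
  have hpos := mul_pos hgd (normalizedSymbolSq_pos hτ hz)
  have hmW : mW g d T =ᶠ[𝓝 z] fun y => √(g * d * normalizedSymbolSq (T / (g * d ^ 2)) y) := by
    filter_upwards [lt_mem_nhds hz] with y hy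
    exact mW_eq_sqrt_normalizedSymbolSq g d T hy.ne'
  rw [hmW.eq_of_nhds]
  have hsqrt := ((hasDerivAt_normalizedSymbolSq _ hz).const_mul (g * d)).sqrt hpos.ne'
  exact hsqrt.congr_of_eventuallyEq hmW

theorem sign_deriv_mW {g d T z : ℝ} (hgd : 0 < g * d) (hτ : 0 ≤ T / (g * d ^ 2)) (hz : 0 < z) :
    SignType.sign (deriv (mW g d T) z) = SignType.sign (T / (g * d ^ 2) - criticalTau z) := by
  have hmW : 0 < mW g d T z := by
    rw [mW_eq_sqrt_normalizedSymbolSq g d T hz.ne']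
    exact sqrt_pos.2 (mul_pos hgd (normalizedSymbolSq_pos hτ hz))
  have := sinh_mul_cosh_add_self_pos hz
  have := cosh_pos z
  have hfactor : 0 < g * d * ((sinh z * cosh z + z) / cosh z ^ 2) / (2 * mW g d T z) := by
    positivity
  rw [(hasDerivAt_mW hgd hτ hz).deriv, ← mul_assoc, mul_div_right_comm, sign_mul,
    sign_pos hfactor, one_mul]

theorem deriv_mW_eq_zero_iff {g d T z : ℝ} (hgd : 0 < g * d) (hτ : 0 ≤ T / (g * d ^ 2))
    (hz : 0 < z) : deriv (mW g d T) z = 0 ↔ T / (g * d ^ 2) = criticalTau z := by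
  rw [← _root_.sign_eq_zero_iff, sign_deriv_mW hgd hτ hz, _root_.sign_eq_zero_iff, sub_eq_zero]

theorem strictAntiOn_mW {g d T w : ℝ} (hgd : 0 < g * d) (hτ : 0 ≤ T / (g * d ^ 2))
    (hw : T / (g * d ^ 2) ≤ criticalTau w) : StrictAntiOn (mW g d T) (Set.Ioc 0 w) := by
  refine strictAntiOn_of_deriv_neg (convex_Ioc 0 w)
    (fun z hz => (hasDerivAt_mW hgd hτ hz.1).continuousAt.continuousWithinAt) fun z hz => ?_
  obtain ⟨hz, hzw⟩ : 0 < z ∧ z < w := by rwa [interior_Ioc] at hz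
  rw [← sign_eq_neg_one_iff, sign_deriv_mW hgd hτ hz, sign_eq_neg_one_iff, sub_neg]
  exact hw.trans_lt (strictAntiOn_criticalTau hz (hz.trans hzw) hzw)

theorem strictMonoOn_mW {g d T w : ℝ} (hgd : 0 < g * d) (hτ : 0 ≤ T / (g * d ^ 2)) (hw0 : 0 < w)
    (hw : criticalTau w ≤ T / (g * d ^ 2)) : StrictMonoOn (mW g d T) (Set.Ici w) := by
  refine strictMonoOn_of_deriv_pos (convex_Ici w)
    (fun z hz => (hasDerivAt_mW hgd hτ (hw0.trans_le hz)).continuousAt.continuousWithinAt)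
    fun z hz => ?_
  rw [interior_Ici] at hz
  have hz0 : 0 < z := hw0.trans hz
  rw [← sign_eq_one_iff, sign_deriv_mW hgd hτ hz0, sign_eq_one_iff, sub_pos]
  exact (strictAntiOn_criticalTau hw0 hz0 hz).trans_le hw

theorem tendsto_mW_atTop {g d T : ℝ} (hgd : 0 < g * d) (hτ : 0 < T / (g * d ^ 2)) :
    Tendsto (mW g d T) atTop atTop := by
  refine (tendsto_sqrt_atTop.comp
    ((tendsto_normalizedSymbolSq_atTop hτ).const_mul_atTop hgd)).congr' ?_
  filter_upwards [eventually_ne_atTop 0] with z hz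
  exact (mW_eq_sqrt_normalizedSymbolSq g d T hz).symm

/-- if `0 < τ < 1/3` then `m` has a unique critical point `z*` on `(0,∞)`;
`m` is strictly decreasing on `(0, z*]`, strictly increasing on `[z*, ∞)`, so `z*` is the
unique (strict global) minimum of `m` on `(0,∞)`; moreover `m(z) → ∞` as `z → ∞`. -/
theorem whitham_symbol_unique_minimum_of_small_surface_tension (g d T : ℝ)
    (hg : 0 < g) (hd : 0 < d)
    (hτ0 : 0 < T / (g * d ^ 2)) (hτ1 : T / (g * d ^ 2) < 1 / 3) :
    ∃ zstar : ℝ, 0 < zstar ∧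
      (∀ z : ℝ, 0 < z → (deriv (mW g d T) z = 0 ↔ z = zstar)) ∧
      StrictAntiOn (mW g d T) (Set.Ioc 0 zstar) ∧
      StrictMonoOn (mW g d T) (Set.Ici zstar) ∧
      (∀ z : ℝ, 0 < z → z ≠ zstar → mW g d T zstar < mW g d T z) ∧
      Tendsto (mW g d T) atTop atTop := by
  have hgd : 0 < g * d := mul_pos hg hd
  obtain ⟨w, hw, hτ⟩ := exists_criticalTau_eq hτ0 hτ1
  have hanti := strictAntiOn_mW hgd hτ0.le hτ.ge
  have hmono := strictMonoOn_mW hgd hτ0.le hw hτ.le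
  refine ⟨w, hw, fun z hz => ?_, hanti, hmono, fun z hz hne =>
    lt_of_strictAntiOn_Ioc_of_strictMonoOn_Ici hanti hmono hz hne, tendsto_mW_atTop hgd hτ0⟩
  rw [deriv_mW_eq_zero_iff hgd hτ0.le hz, ← hτ, strictAntiOn_criticalTau.eq_iff_eq hw hz, eq_comm]
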